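/- Let X_1, X_2, … be i.i.d. isotropic random vectors in ℝ^d (centered with identity covariance) whose common law ν_1 satisfies C_p(ν_1) ≤ 2, and let ν_n be the law of (1/√n) Σ_{i=1}^n X_i. Then for every n ≥ 0, C_p(ν_{2^n}) − 1 ≤ 7/(n + 7). -/

import Mathlib

open MeasureTheory ProbabilityTheory ENNReal

/-- The Poincaré constant of a Borel probability measure on `ℝ^d`: the smallest constant `C`
such that `Var_μ(f) ≤ C ∫ |∇f|² dμ` for all locally Lipschitz `f : ℝ^d → ℝ`
(`+∞` if no finite constant works). -/
noncomputable def poincareConst {d : ℕ} (μ : Measure (EuclideanSpace ℝ (Fin d))) : ℝ≥0∞ :=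
  sInf {C : ℝ≥0∞ | ∀ f : EuclideanSpace ℝ (Fin d) → ℝ, LocallyLipschitz f →
    evariance f μ ≤ C * ∫⁻ x, ‖gradient f x‖₊ ^ 2 ∂μ}

/-- The law of the standardized sum `(1/√n) ∑_{i=1}^n X_i` of `n` i.i.d. random vectors with
common law `ν₁`. -/
noncomputable def stdSumLaw {d : ℕ} (ν₁ : Measure (EuclideanSpace ℝ (Fin d))) (n : ℕ) :
    Measure (EuclideanSpace ℝ (Fin d)) :=
  Measure.map (fun x : Fin n → EuclideanSpace ℝ (Fin d) => (Real.sqrt n)⁻¹ • ∑ i, x i)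
    (Measure.pi fun _ : Fin n => ν₁)

/-- A probability measure on `ℝ^d` is isotropic if it has finite second moments, is centered,
and has identity covariance matrix. -/
def IsIsotropic {d : ℕ} (μ : Measure (EuclideanSpace ℝ (Fin d))) : Prop :=
  Integrable (fun x => ‖x‖ ^ 2) μ ∧ (∫ x, x ∂μ) = 0 ∧
    ∀ i j : Fin d, ∫ x, x i * x j ∂μ = if i = j then (1 : ℝ) else 0

/-!
Let `X`, `Y`, `Y'` be independent with law `μ`, let `f` be locally Lipschitz, and write
`F = f (X + Y)`, `G = ∇f (X + Y)`, `b = 𝔼 G`. Apply the Poincaré inequality of `μ` to the function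
`x ↦ f (x + y) + f (x + y') - ⟪c, x⟫` and average over `y`, `y'`. Because `F` is symmetric in
`X` and `Y`, the cross terms on the left cancel and the average variance is
`2 Var F - 4 Cov (F, ⟪c, X⟫) + ‖c‖²`. On the right, the correlation of the gradients
`∇f (X + Y)` and `∇f (X + Y')` is at most `(𝔼 ‖G‖² + ‖b‖²) / 2`: compare the diagonal with the
antidiagonal sum of `∇f` over an array `Xᵢ + Yⱼ`, `i, j ∈ {1, 2}`. With `c = b / 4` this gives
`Var F ≤ (7 C + 1) / 4 * 𝔼 ‖G‖²`, improving on the constant `2 C` of tensorisation.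
After rescaling by `√2`, doubling the number of summands multiplies `C - 1` by `7 / 8`, and
`(7 / 8) ^ n ≤ 7 / (n + 7)`.
-/

section SquareIntegrable

variable {α : Type*} [MeasurableSpace α] {μ : Measure α}

theorem memLp_two_of_lintegral_sq_enorm_ne_top {F : Type*} [NormedAddCommGroup F] {f : α → F}
    (hf : AEStronglyMeasurable f μ) (h : ∫⁻ x, ‖f x‖ₑ ^ 2 ∂μ ≠ ∞) : MemLp f 2 μ := by
  refine ⟨hf, ?_⟩
  rw [eLpNorm_lt_top_iff_lintegral_rpow_enorm_lt_top (by simp) (by simp)]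
  simpa using h.lt_top

theorem lintegral_sq_enorm_eq_ofReal_integral {F : Type*} [NormedAddCommGroup F] {f : α → F}
    (hf : MemLp f 2 μ) :
    ∫⁻ x, ‖f x‖ₑ ^ 2 ∂μ = ENNReal.ofReal (∫ x, ‖f x‖ ^ 2 ∂μ) := by
  rw [ofReal_integral_eq_lintegral_ofReal (hf.integrable_norm_pow two_ne_zero)
    (ae_of_all _ fun _ => by positivity)]
  refine lintegral_congr fun x => ?_
  rw [ENNReal.ofReal_pow (norm_nonneg _), ofReal_norm]

variable {E : Type*} [NormedAddCommGroup E] [InnerProductSpace ℝ E]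

theorem integrable_inner_of_memLp_two {U V : α → E} (hU : MemLp U 2 μ) (hV : MemLp V 2 μ) :
    Integrable (fun x => inner ℝ (U x) (V x)) μ :=
  memLp_one_iff_integrable.1 ((innerSL ℝ (E := E)).memLp_of_bilin 1 hU hV)

theorem integral_norm_add_sq {U V : α → E} (hU : MemLp U 2 μ) (hV : MemLp V 2 μ) :
    ∫ x, ‖U x + V x‖ ^ 2 ∂μ =
      ∫ x, ‖U x‖ ^ 2 ∂μ + 2 * ∫ x, inner ℝ (U x) (V x) ∂μ + ∫ x, ‖V x‖ ^ 2 ∂μ := by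
  simp_rw [norm_add_sq_real]
  have hUV := (integrable_inner_of_memLp_two hU hV).const_mul 2
  have hU2 : Integrable (fun x => ‖U x‖ ^ 2) μ := hU.integrable_norm_pow two_ne_zero
  rw [integral_add (by exact hU2.add hUV) (hV.integrable_norm_pow two_ne_zero),
    integral_add hU2 hUV, integral_const_mul]

theorem integral_norm_sub_sq {U V : α → E} (hU : MemLp U 2 μ) (hV : MemLp V 2 μ) :
    ∫ x, ‖U x - V x‖ ^ 2 ∂μ =
      ∫ x, ‖U x‖ ^ 2 ∂μ - 2 * ∫ x, inner ℝ (U x) (V x) ∂μ + ∫ x, ‖V x‖ ^ 2 ∂μ := by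
  simpa [integral_neg, sub_eq_add_neg] using integral_norm_add_sq hU hV.neg

theorem two_mul_integral_inner_le {U V : α → E} (hU : MemLp U 2 μ) (hV : MemLp V 2 μ) :
    2 * ∫ x, inner ℝ (U x) (V x) ∂μ ≤ ∫ x, ‖U x‖ ^ 2 ∂μ + ∫ x, ‖V x‖ ^ 2 ∂μ := by
  have h : 0 ≤ ∫ x, ‖U x - V x‖ ^ 2 ∂μ := integral_nonneg fun _ => by positivity
  rw [integral_norm_sub_sq hU hV] at h
  linarith

variable [CompleteSpace E]

theorem integral_norm_sub_const_sq [IsProbabilityMeasure μ] {U : α → E} (hU : MemLp U 2 μ)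
    (c : E) :
    ∫ x, ‖U x - c‖ ^ 2 ∂μ = ∫ x, ‖U x‖ ^ 2 ∂μ - 2 * inner ℝ c (∫ x, U x ∂μ) + ‖c‖ ^ 2 := by
  rw [integral_norm_sub_sq hU (memLp_const c)]
  simp_rw [fun x => real_inner_comm c (U x)]
  rw [integral_inner (hU.integrable one_le_two)]
  simp

theorem sq_norm_integral_le [IsProbabilityMeasure μ] {U : α → E} (hU : MemLp U 2 μ) :
    ‖∫ x, U x ∂μ‖ ^ 2 ≤ ∫ x, ‖U x‖ ^ 2 ∂μ := by
  have h : 0 ≤ ∫ x, ‖U x - ∫ y, U y ∂μ‖ ^ 2 ∂μ := integral_nonneg fun _ => by positivity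
  rw [integral_norm_sub_const_sq hU, real_inner_self_eq_norm_sq] at h
  linarith

theorem integral_inner_prod_self [IsProbabilityMeasure μ] {U : α → E} (hU : MemLp U 2 μ) :
    ∫ p, inner ℝ (U p.1) (U p.2) ∂(μ.prod μ) = ‖∫ x, U x ∂μ‖ ^ 2 := by
  have hi : Integrable U μ := hU.integrable one_le_two
  rw [integral_prod _ (integrable_inner_of_memLp_two (hU.comp_fst μ) (hU.comp_snd μ))]
  simp_rw [integral_inner hi, fun x => real_inner_comm (∫ y, U y ∂μ) (U x)]
  rw [integral_inner hi, real_inner_self_eq_norm_sq]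

end SquareIntegrable

theorem integral_comp_of_measurePreserving {α β F : Type*} [MeasurableSpace α]
    [MeasurableSpace β] {μ : Measure α} {ν : Measure β} [NormedAddCommGroup F] [NormedSpace ℝ F]
    {T : α → β} (hT : MeasurePreserving T μ ν) {g : β → F} (hg : AEStronglyMeasurable g ν) :
    ∫ x, g (T x) ∂μ = ∫ y, g y ∂ν :=
  hT.hasLaw.integral_comp hg

theorem evariance_comp_of_measurePreserving {α β : Type*} [MeasurableSpace α] [MeasurableSpace β]
    {μ : Measure α} {ν : Measure β} {T : α → β} (hT : MeasurePreserving T μ ν) {X : β → ℝ}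
    (hX : Measurable X) : evariance (fun x => X (T x)) μ = evariance X ν := by
  rw [evariance, evariance, integral_comp_of_measurePreserving hT hX.aestronglyMeasurable,
    hT.lintegral_comp (f := fun y => ‖X y - ∫ y, X y ∂ν‖ₑ ^ 2) (by fun_prop)]

theorem evariance_eq_lintegral_of_antisymm {α : Type*} [MeasurableSpace α] {μ : Measure α}
    {T : α → α} (hT : MeasurePreserving T μ μ) {X : α → ℝ} (hX : AEStronglyMeasurable X μ)
    (hXT : ∀ x, X (T x) = -X x) : evariance X μ = ∫⁻ x, ‖X x‖ₑ ^ 2 ∂μ := by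
  have hmean : ∫ x, X x ∂μ = -∫ x, X x ∂μ := by
    rw [← integral_neg, ← integral_comp_of_measurePreserving hT hX]
    exact integral_congr_ae (ae_of_all _ hXT)
  simp [evariance, self_eq_neg.1 hmean]

section TwoCopies

variable {α β : Type*} [MeasurableSpace α] [MeasurableSpace β] {μ : Measure α} {ν : Measure β}

theorem covariance_sub_swap [IsProbabilityMeasure μ] {u v : α → ℝ} (hu : MemLp u 2 μ)
    (hv : MemLp v 2 μ) :
    cov[fun p => u p.1 - u p.2, fun p => v p.1 - v p.2; μ.prod μ] = 2 * cov[u, v; μ] := by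
  rw [covariance_fun_sub_fun_sub (hu.comp_fst μ) (hu.comp_snd μ) (hv.comp_fst μ) (hv.comp_snd μ),
    measurePreserving_fst.hasLaw.covariance_fun_comp hu.aemeasurable hv.aemeasurable,
    measurePreserving_snd.hasLaw.covariance_fun_comp hu.aemeasurable hv.aemeasurable,
    covariance_fst_snd_prod hu hv, covariance_comm (fun p : α × α => u p.2),
    covariance_fst_snd_prod hv hu]
  ring

theorem variance_sub_swap [IsProbabilityMeasure μ] {u : α → ℝ} (hu : MemLp u 2 μ) :
    Var[fun p => u p.1 - u p.2; μ.prod μ] = 2 * Var[u; μ] := by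
  have hdiff : MemLp (fun p : α × α => u p.1 - u p.2) 2 (μ.prod μ) :=
    (hu.comp_fst μ).sub (hu.comp_snd μ)
  rw [← covariance_self hdiff.aemeasurable, covariance_sub_swap hu hu,
    covariance_self hu.aemeasurable]

theorem memLp_two_of_memLp_two_sub [IsProbabilityMeasure μ] {f : α → ℝ} (hf : Measurable f)
    (h : MemLp (fun p : α × α => f p.1 - f p.2) 2 (μ.prod μ)) : MemLp f 2 μ := by
  have hfin : ∫⁻ p, ‖f p.1 - f p.2‖ₑ ^ 2 ∂(μ.prod μ) ≠ ∞ := by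
    simp [lintegral_sq_enorm_eq_ofReal_integral h]
  have hm : Measurable fun p : α × α => ‖f p.1 - f p.2‖ₑ ^ 2 := by fun_prop
  rw [lintegral_prod_symm' _ hm] at hfin
  obtain ⟨y, hy⟩ := (ae_lt_top hm.lintegral_prod_left' hfin).exists
  have hsection : MemLp (fun x => f x - f y) 2 μ :=
    memLp_two_of_lintegral_sq_enorm_ne_top (by fun_prop) hy.ne
  convert hsection.add (memLp_const (f y)) using 1
  ext x
  simp

theorem evariance_sub_swap [IsProbabilityMeasure μ] {f : α → ℝ} (hf : Measurable f) :
    evariance (fun p : α × α => f p.1 - f p.2) (μ.prod μ) = 2 * evariance f μ := by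
  have hfm := hf.aestronglyMeasurable (μ := μ)
  by_cases h : MemLp f 2 μ
  · have hdiff : MemLp (fun p : α × α => f p.1 - f p.2) 2 (μ.prod μ) :=
      (h.comp_fst μ).sub (h.comp_snd μ)
    rw [← ofReal_variance hdiff, variance_sub_swap h, ENNReal.ofReal_mul two_pos.le,
      ofReal_variance h, ENNReal.ofReal_ofNat]
  · rw [evariance_eq_top hfm h, evariance_eq_top (by fun_prop)
      fun hdiff => h (memLp_two_of_memLp_two_sub hf hdiff)]
    simp

theorem lintegral_sq_enorm_sub_swap [IsProbabilityMeasure μ] {f : α → ℝ}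
    (hf : Measurable f) :
    ∫⁻ p, ‖f p.1 - f p.2‖ₑ ^ 2 ∂(μ.prod μ) = 2 * evariance f μ := by
  rw [← evariance_sub_swap hf, evariance_eq_lintegral_of_antisymm
    Measure.measurePreserving_swap (by fun_prop) fun p => (neg_sub _ _).symm]

theorem sq_enorm_sub_le (a b c : ℝ) :
    ‖a - c‖ₑ ^ 2 ≤ 2 * (‖a - b‖ₑ ^ 2 + ‖b - c‖ₑ ^ 2) := by
  have h := ENNReal.rpow_add_le_mul_rpow_add_rpow ‖a - b‖ₑ ‖b - c‖ₑ one_le_two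
  norm_num at h
  refine le_trans ?_ h
  gcongr
  simpa using enorm_add_le (a - b) (b - c)

theorem measurePreserving_prodProdProdComm [IsProbabilityMeasure μ] [IsProbabilityMeasure ν] :
    MeasurePreserving (fun z : (α × α) × β × β => ((z.1.1, z.2.1), (z.1.2, z.2.2)))
      ((μ.prod μ).prod (ν.prod ν)) ((μ.prod ν).prod (μ.prod ν)) := by
  have hswap : MeasurePreserving (Prod.swap : α × β → β × α) (μ.prod ν) (ν.prod μ) :=
    Measure.measurePreserving_swap
  have hmiddle := (measurePreserving_prodAssoc ν μ ν).comp
    ((hswap.prod (MeasurePreserving.id ν)).comp (measurePreserving_prodAssoc μ ν ν).symm)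
  exact (measurePreserving_prodAssoc μ ν (μ.prod ν)).symm.comp
    (((MeasurePreserving.id μ).prod hmiddle).comp (measurePreserving_prodAssoc μ μ (ν.prod ν)))

theorem lintegral_sq_enorm_sub_section [IsProbabilityMeasure μ] [SFinite ν]
    {F : α × β → ℝ} (hF : Measurable F) :
    ∫⁻ z : (α × α) × β, ‖F (z.1.1, z.2) - F (z.1.2, z.2)‖ₑ ^ 2 ∂(μ.prod μ).prod ν =
      2 * ∫⁻ y, evariance (fun x => F (x, y)) μ ∂ν := by
  rw [lintegral_prod_symm' _ (by fun_prop), ← lintegral_const_mul' _ _ (by simp)]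
  exact lintegral_congr fun y => lintegral_sq_enorm_sub_swap (f := fun x => F (x, y)) (by fun_prop)

theorem evariance_prod_le [IsProbabilityMeasure μ] [IsProbabilityMeasure ν] {F : α × β → ℝ}
    (hF : Measurable F) :
    evariance F (μ.prod ν) ≤ 2 * (∫⁻ y, evariance (fun x => F (x, y)) μ ∂ν +
      ∫⁻ x, evariance (fun y => F (x, y)) ν ∂μ) := by
  have hfst : ∫⁻ z : (α × α) × β × β, ‖F (z.1.1, z.2.1) - F (z.1.2, z.2.1)‖ₑ ^ 2
      ∂(μ.prod μ).prod (ν.prod ν) = 2 * ∫⁻ y, evariance (fun x => F (x, y)) μ ∂ν := by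
    have hforget := (MeasurePreserving.id (μ.prod μ)).prod (measurePreserving_fst (μ := ν) (ν := ν))
    rw [← lintegral_sq_enorm_sub_section hF, ← hforget.lintegral_comp (by fun_prop)]
    rfl
  have hsnd : ∫⁻ z : (α × α) × β × β, ‖F (z.1.2, z.2.1) - F (z.1.2, z.2.2)‖ₑ ^ 2
      ∂(μ.prod μ).prod (ν.prod ν) = 2 * ∫⁻ x, evariance (fun y => F (x, y)) ν ∂μ := by
    have hforget := Measure.measurePreserving_swap.comp
      ((measurePreserving_snd (μ := μ) (ν := μ)).prod (MeasurePreserving.id (ν.prod ν)))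
    refine Eq.trans ?_ (lintegral_sq_enorm_sub_section (F := F ∘ Prod.swap) (by fun_prop))
    rw [← hforget.lintegral_comp (by fun_prop)]
    rfl
  refine (ENNReal.mul_le_mul_iff_right (a := 2) (by simp) (by simp)).1 ?_
  rw [← lintegral_sq_enorm_sub_swap hF, mul_add 2 (lintegral ν _), ← hfst, ← hsnd,
    ← lintegral_add_left (by fun_prop), ← lintegral_const_mul _ (by fun_prop),
    ← measurePreserving_prodProdProdComm.lintegral_comp (by fun_prop)]
  exact lintegral_mono fun z => sq_enorm_sub_le _ _ _

end TwoCopies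

/- A point `((x₁, x₂), (y₁, y₂))` of `(α × α) × α × α` stands for four independent points with law
`μ`, and `F` or `G` is evaluated on the `2 × 2` array of the `(xᵢ, yⱼ)`. -/
section FourPoints

variable {α : Type*} [MeasurableSpace α] {μ : Measure α} [IsProbabilityMeasure μ]

theorem covariance_exchange_eq_zero {F : α × α → ℝ} (hF : Measurable F)
    (hsymm : ∀ p, F p.swap = F p) :
    cov[fun z => F (z.1.1, z.2.1) - F (z.1.2, z.2.2),
      fun z => F (z.1.1, z.2.2) - F (z.1.2, z.2.1); (μ.prod μ).prod (μ.prod μ)] = 0 := by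
  have hs : ∀ a b, F (a, b) = F (b, a) := fun a b => hsymm (b, a)
  set A : (α × α) × α × α → ℝ := fun z => F (z.1.1, z.2.1) - F (z.1.2, z.2.2)
  set B : (α × α) × α × α → ℝ := fun z => F (z.1.1, z.2.2) - F (z.1.2, z.2.1)
  have hτ : MeasurePreserving Prod.swap ((μ.prod μ).prod (μ.prod μ))
    ((μ.prod μ).prod (μ.prod μ)) := Measure.measurePreserving_swap
  have h := hτ.hasLaw.covariance_comp (f := A) (g := B) (by fun_prop) (by fun_prop)
  have hA : A ∘ Prod.swap = A := by
    ext z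
    simp [A, hs]
  have hB : B ∘ Prod.swap = -B := by
    ext z
    simp [B, hs]
  rw [hA, hB, covariance_neg_right] at h
  linarith

theorem covariance_sub_diagonal {F K : α × α → ℝ} (hF : MemLp F 2 (μ.prod μ))
    (hK : MemLp K 2 (μ.prod μ)) :
    cov[fun z => F (z.1.1, z.2.1) - F (z.1.2, z.2.2),
      fun z => K (z.1.1, z.2.1) - K (z.1.2, z.2.2); (μ.prod μ).prod (μ.prod μ)] =
      2 * cov[F, K; μ.prod μ] := by
  rw [← covariance_sub_swap hF hK]
  exact measurePreserving_prodProdProdComm.hasLaw.covariance_fun_comp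
    (hF.comp_fst _ |>.sub (hF.comp_snd _)).aemeasurable
    (hK.comp_fst _ |>.sub (hK.comp_snd _)).aemeasurable

theorem memLp_sub_diagonal {F : α × α → ℝ} (hF : MemLp F 2 (μ.prod μ)) :
    MemLp (fun z => F (z.1.1, z.2.1) - F (z.1.2, z.2.2)) 2 ((μ.prod μ).prod (μ.prod μ)) :=
  ((hF.comp_fst _).sub (hF.comp_snd _)).comp_measurePreserving measurePreserving_prodProdProdComm

theorem variance_sub_diagonal {F : α × α → ℝ} (hF : MemLp F 2 (μ.prod μ)) :
    Var[fun z => F (z.1.1, z.2.1) - F (z.1.2, z.2.2); (μ.prod μ).prod (μ.prod μ)] =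
      2 * Var[F; μ.prod μ] := by
  rw [← covariance_self (memLp_sub_diagonal hF).aemeasurable, covariance_sub_diagonal hF hF,
    covariance_self hF.aemeasurable]

theorem variance_four_points {F : α × α → ℝ} (hF : Measurable F) (hF2 : MemLp F 2 (μ.prod μ))
    (hsymm : ∀ p, F p.swap = F p) {l : α → ℝ} (hl2 : MemLp l 2 μ) :
    Var[fun z => (F (z.1.1, z.2.1) - F (z.1.2, z.2.2)) + (F (z.1.1, z.2.2) - F (z.1.2, z.2.1)) -
      (l z.1.1 - l z.1.2); (μ.prod μ).prod (μ.prod μ)] =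
      2 * (2 * Var[F; μ.prod μ] - 4 * cov[F, fun p => l p.1; μ.prod μ] + Var[l; μ]) := by
  set P := (μ.prod μ).prod (μ.prod μ)
  let A : (α × α) × α × α → ℝ := fun z => F (z.1.1, z.2.1) - F (z.1.2, z.2.2)
  let B : (α × α) × α × α → ℝ := fun z => F (z.1.1, z.2.2) - F (z.1.2, z.2.1)
  let L : (α × α) × α × α → ℝ := fun z => l z.1.1 - l z.1.2
  change Var[fun z => A z + B z - L z; P] = _
  have hσ : MeasurePreserving (Prod.map id Prod.swap) P P :=
    (MeasurePreserving.id _).prod Measure.measurePreserving_swap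
  have hl2' : MemLp (fun p : α × α => l p.1) 2 (μ.prod μ) := hl2.comp_fst μ
  have hA : MemLp A 2 P := memLp_sub_diagonal hF2
  have hB : MemLp B 2 P := hA.comp_measurePreserving hσ
  have hL : MemLp L 2 P := memLp_sub_diagonal hl2'
  have hVarA : Var[A; P] = 2 * Var[F; μ.prod μ] := variance_sub_diagonal hF2
  have hVarB : Var[B; P] = Var[A; P] := hσ.variance_fun_comp (f := A) hA.aemeasurable
  have hVarL : Var[L; P] = 2 * Var[l; μ] := by
    rw [← (measurePreserving_fst (ν := μ)).variance_fun_comp hl2.aemeasurable]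
    exact variance_sub_diagonal (F := fun p => l p.1) hl2'
  have hAL : cov[A, L; P] = 2 * cov[F, fun p => l p.1; μ.prod μ] :=
    covariance_sub_diagonal hF2 hl2'
  have hBL : cov[B, L; P] = cov[A, L; P] :=
    hσ.hasLaw.covariance_fun_comp hA.aemeasurable hL.aemeasurable
  have hAB : cov[A, B; P] = 0 := covariance_exchange_eq_zero hF hsymm
  have hsum : MemLp (fun z => A z + B z) 2 P := hA.add hB
  rw [variance_fun_sub hsum hL, variance_fun_add hA hB, show (fun z => A z + B z) = A + B from rfl,
    covariance_add_left hA hB hL, hBL, hVarB, hVarA, hVarL, hAL, hAB]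
  ring

theorem lintegral_evariance_add_sub {F : α × α → ℝ} (hF : Measurable F)
    (hF2 : MemLp F 2 (μ.prod μ)) (hsymm : ∀ p, F p.swap = F p) {l : α → ℝ} (hl : Measurable l)
    (hl2 : MemLp l 2 μ) :
    ∫⁻ q, evariance (fun x => F (x, q.1) + F (x, q.2) - l x) μ ∂(μ.prod μ) =
      ENNReal.ofReal (2 * Var[F; μ.prod μ] - 4 * cov[F, fun p => l p.1; μ.prod μ] + Var[l; μ]) := by
  set D : (α × α) × α × α → ℝ := fun z =>
    (F (z.1.1, z.2.1) - F (z.1.2, z.2.2)) + (F (z.1.1, z.2.2) - F (z.1.2, z.2.1)) -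
      (l z.1.1 - l z.1.2) with hD
  have hD2 : MemLp D 2 ((μ.prod μ).prod (μ.prod μ)) := by
    have hσ : MeasurePreserving (Prod.map id Prod.swap) ((μ.prod μ).prod (μ.prod μ))
      ((μ.prod μ).prod (μ.prod μ)) :=
      (MeasurePreserving.id _).prod Measure.measurePreserving_swap
    exact ((memLp_sub_diagonal hF2).add
      ((memLp_sub_diagonal hF2).comp_measurePreserving hσ)).sub
      (memLp_sub_diagonal (hl2.comp_fst μ))
  have hantisymm : evariance D ((μ.prod μ).prod (μ.prod μ)) =
      ∫⁻ z, ‖D z‖ₑ ^ 2 ∂(μ.prod μ).prod (μ.prod μ) :=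
    evariance_eq_lintegral_of_antisymm
      (Measure.measurePreserving_swap.prod (MeasurePreserving.id _)) hD2.aestronglyMeasurable
      fun z => by simp only [hD, Prod.map_fst, Prod.map_snd, Prod.fst_swap, Prod.snd_swap, id]; ring
  refine (ENNReal.mul_right_inj (a := 2) (by simp) (by simp)).1 ?_
  rw [← ENNReal.ofReal_ofNat 2, ← ENNReal.ofReal_mul two_pos.le,
    ← variance_four_points hF hF2 hsymm hl2, ofReal_variance hD2, hantisymm, ENNReal.ofReal_ofNat,
    ← lintegral_sq_enorm_sub_section (F := fun z : α × α × α =>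
      F (z.1, z.2.1) + F (z.1, z.2.2) - l z.1) (by fun_prop)]
  refine lintegral_congr fun z => ?_
  rw [hD]
  ring_nf

theorem memLp_shared_fst {F : Type*} [NormedAddCommGroup F] {G : α × α → F} {r : ℝ≥0∞}
    (hG : MemLp G r (μ.prod μ)) :
    MemLp (fun z : α × α × α => G (z.1, z.2.1)) r (μ.prod (μ.prod μ)) :=
  hG.comp_measurePreserving ((MeasurePreserving.id μ).prod measurePreserving_fst)

theorem memLp_shared_snd {F : Type*} [NormedAddCommGroup F] {G : α × α → F} {r : ℝ≥0∞}
    (hG : MemLp G r (μ.prod μ)) :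
    MemLp (fun z : α × α × α => G (z.1, z.2.2)) r (μ.prod (μ.prod μ)) :=
  hG.comp_measurePreserving ((MeasurePreserving.id μ).prod measurePreserving_snd)

theorem four_mul_covariance_fst_le {F : α × α → ℝ} (hF : MemLp F 2 (μ.prod μ))
    (hsymm : ∀ p, F p.swap = F p) {l : α → ℝ} (hl : MemLp l 2 μ) :
    4 * cov[F, fun p => l p.1; μ.prod μ] ≤ Var[F; μ.prod μ] + 2 * Var[l; μ] := by
  have hfst : MemLp (fun p : α × α => l p.1) 2 (μ.prod μ) := hl.comp_fst μ
  have hsnd : MemLp (fun p : α × α => l p.2) 2 (μ.prod μ) := hl.comp_snd μ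
  have hcov : cov[F, fun p => l p.2; μ.prod μ] = cov[F, fun p => l p.1; μ.prod μ] := by
    have hswap : MeasurePreserving Prod.swap (μ.prod μ) (μ.prod μ) :=
      Measure.measurePreserving_swap
    have h := hswap.hasLaw.covariance_fun_comp hF.aemeasurable hfst.aemeasurable
    simpa only [hsymm, Prod.fst_swap] using h
  have hvar : Var[fun p : α × α => l p.1 + l p.2; μ.prod μ] = 2 * Var[l; μ] := by
    rw [variance_add_prod hl hl, two_mul]
  have hsum : MemLp (fun p : α × α => l p.1 + l p.2) 2 (μ.prod μ) := hfst.add hsnd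
  have hnonneg := variance_nonneg (fun p => F p - (l p.1 + l p.2)) (μ.prod μ)
  rw [variance_fun_sub hF hsum, hvar, show (fun p : α × α => l p.1 + l p.2) =
    (fun p => l p.1) + fun p => l p.2 from rfl, covariance_add_right hF hfst hsnd, hcov] at hnonneg
  linarith

variable {E : Type*} [NormedAddCommGroup E] [InnerProductSpace ℝ E]

theorem integral_inner_row {G : α × α → E} (hG : MemLp G 2 (μ.prod μ)) :
    ∫ z : (α × α) × α × α, inner ℝ (G (z.1.1, z.2.1)) (G (z.1.1, z.2.2))
        ∂(μ.prod μ).prod (μ.prod μ) =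
      ∫ z : α × α × α, inner ℝ (G (z.1, z.2.1)) (G (z.1, z.2.2)) ∂(μ.prod (μ.prod μ)) :=
  integral_comp_of_measurePreserving
    (measurePreserving_fst.prod (MeasurePreserving.id _))
    (integrable_inner_of_memLp_two (memLp_shared_fst hG)
      (memLp_shared_snd hG)).aestronglyMeasurable

theorem integral_inner_diagonal_antidiagonal {G : α × α → E} (hG : MemLp G 2 (μ.prod μ))
    (hsymm : ∀ p, G p.swap = G p) :
    ∫ z : (α × α) × α × α, inner ℝ (G (z.1.1, z.2.1) + G (z.1.2, z.2.2))
        (G (z.1.1, z.2.2) + G (z.1.2, z.2.1)) ∂(μ.prod μ).prod (μ.prod μ) =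
      4 * ∫ z : α × α × α, inner ℝ (G (z.1, z.2.1)) (G (z.1, z.2.2)) ∂(μ.prod (μ.prod μ)) := by
  have hs : ∀ a b, G (a, b) = G (b, a) := fun a b => hsymm (b, a)
  set P := (μ.prod μ).prod (μ.prod μ)
  have hswap : MeasurePreserving Prod.swap (μ.prod μ) (μ.prod μ) := Measure.measurePreserving_swap
  have hσ : MeasurePreserving (Prod.map id Prod.swap) P P := (MeasurePreserving.id _).prod hswap
  have hσσ : MeasurePreserving (Prod.map Prod.swap Prod.swap) P P := hswap.prod hswap
  have hτ : MeasurePreserving Prod.swap P P := Measure.measurePreserving_swap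
  have hT : MeasurePreserving _ P P := measurePreserving_prodProdProdComm
  let G₁₁ (z : (α × α) × α × α) : E := G (z.1.1, z.2.1)
  let G₁₂ (z : (α × α) × α × α) : E := G (z.1.1, z.2.2)
  let G₂₁ (z : (α × α) × α × α) : E := G (z.1.2, z.2.1)
  let G₂₂ (z : (α × α) × α × α) : E := G (z.1.2, z.2.2)
  have h₁₁ : MemLp G₁₁ 2 P := (hG.comp_fst _).comp_measurePreserving hT
  have h₂₂ : MemLp G₂₂ 2 P := (hG.comp_snd _).comp_measurePreserving hT
  have h₁₂ : MemLp G₁₂ 2 P := h₁₁.comp_measurePreserving hσ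
  have h₂₁ : MemLp G₂₁ 2 P := h₂₂.comp_measurePreserving hσ
  have h₁₁₁₂ := integrable_inner_of_memLp_two h₁₁ h₁₂
  have h₁₁₂₁ := integrable_inner_of_memLp_two h₁₁ h₂₁
  have hK : MemLp (fun z => G₁₂ z + G₂₁ z) 2 P := h₁₂.add h₂₁
  have h_row : ∫ z, inner ℝ (G₂₂ z) (G₁₂ z + G₂₁ z) ∂P =
      ∫ z, inner ℝ (G₁₁ z) (G₁₂ z + G₂₁ z) ∂P := by
    rw [← integral_comp_of_measurePreserving hσσ
      (integrable_inner_of_memLp_two h₁₁ hK).aestronglyMeasurable]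
    simp [G₁₁, G₁₂, G₂₁, G₂₂, add_comm]
  have h_transpose : ∫ z, inner ℝ (G₁₁ z) (G₂₁ z) ∂P = ∫ z, inner ℝ (G₁₁ z) (G₁₂ z) ∂P := by
    rw [← integral_comp_of_measurePreserving hτ h₁₁₁₂.aestronglyMeasurable]
    simp [G₁₁, G₁₂, G₂₁, hs]
  calc ∫ z, inner ℝ (G₁₁ z + G₂₂ z) (G₁₂ z + G₂₁ z) ∂P
      = 2 * ∫ z, inner ℝ (G₁₁ z) (G₁₂ z + G₂₁ z) ∂P := by
        simp_rw [inner_add_left]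
        rw [integral_add (integrable_inner_of_memLp_two h₁₁ hK)
          (integrable_inner_of_memLp_two h₂₂ hK), h_row, two_mul]
    _ = 4 * ∫ z, inner ℝ (G₁₁ z) (G₁₂ z) ∂P := by
        simp_rw [inner_add_right]
        rw [integral_add h₁₁₁₂ h₁₁₂₁, h_transpose]
        ring
    _ = _ := by rw [integral_inner_row hG]

variable [CompleteSpace E]

theorem integral_norm_add_diagonal_sq {G : α × α → E} (hG : MemLp G 2 (μ.prod μ)) :
    ∫ z : (α × α) × α × α, ‖G (z.1.1, z.2.1) + G (z.1.2, z.2.2)‖ ^ 2 ∂(μ.prod μ).prod (μ.prod μ) =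
      2 * ∫ p, ‖G p‖ ^ 2 ∂(μ.prod μ) + 2 * ‖∫ p, G p ∂(μ.prod μ)‖ ^ 2 := by
  have hfst := hG.comp_fst (μ.prod μ)
  have hsnd := hG.comp_snd (μ.prod μ)
  rw [integral_comp_of_measurePreserving (measurePreserving_prodProdProdComm (μ := μ) (ν := μ))
    (g := fun w => ‖G w.1 + G w.2‖ ^ 2) (hfst.add hsnd).integrable_norm_pow'.aestronglyMeasurable,
    integral_norm_add_sq hfst hsnd, integral_inner_prod_self hG,
    integral_fun_fst (fun p => ‖G p‖ ^ 2), integral_fun_snd (fun p => ‖G p‖ ^ 2)]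
  simp only [probReal_univ, one_smul]
  ring

theorem two_mul_integral_inner_shared_le {G : α × α → E} (hG : MemLp G 2 (μ.prod μ))
    (hsymm : ∀ p, G p.swap = G p) :
    2 * ∫ z : α × α × α, inner ℝ (G (z.1, z.2.1)) (G (z.1, z.2.2)) ∂(μ.prod (μ.prod μ)) ≤
      ∫ p, ‖G p‖ ^ 2 ∂(μ.prod μ) + ‖∫ p, G p ∂(μ.prod μ)‖ ^ 2 := by
  have hσ : MeasurePreserving (Prod.map id Prod.swap) ((μ.prod μ).prod (μ.prod μ))
    ((μ.prod μ).prod (μ.prod μ)) := (MeasurePreserving.id _).prod Measure.measurePreserving_swap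
  have hdiag : MemLp (fun z : (α × α) × α × α => G (z.1.1, z.2.1) + G (z.1.2, z.2.2)) 2
      ((μ.prod μ).prod (μ.prod μ)) :=
    ((hG.comp_fst _).add (hG.comp_snd _)).comp_measurePreserving measurePreserving_prodProdProdComm
  have hcauchy := two_mul_integral_inner_le hdiag (hdiag.comp_measurePreserving hσ)
  have hσ_norm := integral_comp_of_measurePreserving hσ
    hdiag.integrable_norm_pow'.aestronglyMeasurable
  simp only [Function.comp_apply, Prod.map_fst, Prod.map_snd, id, Prod.fst_swap, Prod.snd_swap]
    at hcauchy hσ_norm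
  rw [hσ_norm, integral_inner_diagonal_antidiagonal hG hsymm, integral_norm_add_diagonal_sq hG]
    at hcauchy
  linarith

theorem integral_norm_add_sub_mean_sq_le {G : α × α → E} (hG : MemLp G 2 (μ.prod μ))
    (hsymm : ∀ p, G p.swap = G p) :
    ∫ z : α × α × α, ‖G (z.1, z.2.1) + G (z.1, z.2.2) - (1 / 4 : ℝ) • ∫ p, G p ∂(μ.prod μ)‖ ^ 2
      ∂(μ.prod (μ.prod μ)) ≤
      3 * ∫ p, ‖G p‖ ^ 2 ∂(μ.prod μ) + ‖∫ p, G p ∂(μ.prod μ)‖ ^ 2 / 16 := by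
  set b := ∫ p, G p ∂(μ.prod μ)
  have hfst : MeasurePreserving (Prod.map id Prod.fst) (μ.prod (μ.prod μ)) (μ.prod μ) :=
    (MeasurePreserving.id _).prod measurePreserving_fst
  have hsnd : MeasurePreserving (Prod.map id Prod.snd) (μ.prod (μ.prod μ)) (μ.prod μ) :=
    (MeasurePreserving.id _).prod measurePreserving_snd
  have hU := memLp_shared_fst hG
  have hV := memLp_shared_snd hG
  have hUb : ∫ z : α × α × α, G (z.1, z.2.1) ∂(μ.prod (μ.prod μ)) = b :=
    integral_comp_of_measurePreserving hfst hG.aestronglyMeasurable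
  have hVb : ∫ z : α × α × α, G (z.1, z.2.2) ∂(μ.prod (μ.prod μ)) = b :=
    integral_comp_of_measurePreserving hsnd hG.aestronglyMeasurable
  have hUg : ∫ z : α × α × α, ‖G (z.1, z.2.1)‖ ^ 2 ∂(μ.prod (μ.prod μ)) =
      ∫ p, ‖G p‖ ^ 2 ∂(μ.prod μ) :=
    integral_comp_of_measurePreserving hfst hG.integrable_norm_pow'.aestronglyMeasurable
  have hVg : ∫ z : α × α × α, ‖G (z.1, z.2.2)‖ ^ 2 ∂(μ.prod (μ.prod μ)) =
      ∫ p, ‖G p‖ ^ 2 ∂(μ.prod μ) :=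
    integral_comp_of_measurePreserving hsnd hG.integrable_norm_pow'.aestronglyMeasurable
  have hUV : MemLp (fun z : α × α × α => G (z.1, z.2.1) + G (z.1, z.2.2)) 2
    (μ.prod (μ.prod μ)) := hU.add hV
  have hshared := two_mul_integral_inner_shared_le hG hsymm
  rw [integral_norm_sub_const_sq hUV, integral_norm_add_sq hU hV, hUg, hVg,
    integral_add (hU.integrable one_le_two) (hV.integrable one_le_two), hUb, hVb,
    inner_add_right, inner_smul_left, real_inner_self_eq_norm_sq, norm_smul]
  norm_num
  linarith

end FourPoints

section Gradient

variable {E : Type*} [NormedAddCommGroup E] [InnerProductSpace ℝ E] [CompleteSpace E]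

/-- The vector field `V` agrees with `∇f` wherever `f` is differentiable. Its values elsewhere are
unconstrained, unlike those of `gradient f`, which vanish there; this makes the notion stable under
sums with differentiable functions. -/
def IsGradientOf (f : E → ℝ) (V : E → E) : Prop :=
  ∀ x, DifferentiableAt ℝ f x → gradient f x = V x

theorem IsGradientOf.norm_gradient_le {f : E → ℝ} {V : E → E} (h : IsGradientOf f V) (x : E) :
    ‖gradient f x‖ ≤ ‖V x‖ := by
  by_cases hx : DifferentiableAt ℝ f x
  · rw [h x hx]
  · simp [gradient_eq_zero_of_not_differentiableAt hx]

theorem isGradientOf_comp_add_right (f : E → ℝ) (y : E) :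
    IsGradientOf (fun x => f (x + y)) fun x => gradient f (x + y) := fun x _ => by
  unfold gradient
  rw [fderiv_comp_add_right]

theorem gradient_comp_smul (f : E → ℝ) (a : ℝ) (x : E) :
    gradient (fun x => f (a • x)) x = a • gradient f (a • x) := by
  unfold gradient
  rw [fderiv_comp_smul, map_smulₛₗ, RCLike.conj_to_real]

theorem IsGradientOf.sub_inner {f : E → ℝ} {V : E → E} (h : IsGradientOf f V) (c : E) :
    IsGradientOf (fun x => f x - inner ℝ c x) fun x => V x - c := by
  intro x hx
  have hl : HasGradientAt (fun x => inner ℝ c x) c x := (innerSL ℝ c).hasFDerivAt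
  have hf : DifferentiableAt ℝ f x := by
    simpa only [sub_add_cancel] using hx.fun_add hl.differentiableAt
  refine Eq.trans ?_ (congrArg (· - c) (h x hf))
  exact (hf.hasGradientAt.hasFDerivAt.sub hl.hasFDerivAt).hasGradientAt.gradient.trans
    (by simp [gradient])

theorem gradient_add_const_mul {f g : E → ℝ} {V W : E → E} (hf : IsGradientOf f V)
    (hg : IsGradientOf g W) {w : ℝ} {x : E} (hgx : DifferentiableAt ℝ g x)
    (hfgx : DifferentiableAt ℝ (fun x => f x + w * g x) x) :
    gradient (fun x => f x + w * g x) x = V x + w • W x := by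
  have hfx : DifferentiableAt ℝ f x := by
    simpa only [add_sub_cancel_right] using hfgx.fun_sub (hgx.const_mul w)
  rw [← hf x hfx, ← hg x hgx]
  unfold gradient
  rw [fderiv_fun_add hfx (hgx.const_mul w), fderiv_const_mul hgx]
  simp

variable [MeasurableSpace E] [BorelSpace E]

theorem measurable_gradient (f : E → ℝ) : Measurable (gradient f) :=
  (LinearIsometryEquiv.continuous _).measurable.comp (measurable_fderiv ℝ f)

end Gradient

/- If `f + w * g` and `f + w' * g` are differentiable at `x` for some `w ≠ w'`, then so is `g`;
hence the sets below are disjoint for distinct `w`, and only countably many have positive mass. -/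
theorem countable_setOf_not_ae_differentiableAt_imp {E : Type*} [NormedAddCommGroup E]
    [NormedSpace ℝ E] [MeasurableSpace E] [BorelSpace E] (μ : Measure E) [IsFiniteMeasure μ]
    (f g : E → ℝ) :
    {w : ℝ | ¬ ∀ᵐ x ∂μ, DifferentiableAt ℝ (fun x => f x + w * g x) x →
      DifferentiableAt ℝ g x}.Countable := by
  let A (w : ℝ) : Set E := {x | DifferentiableAt ℝ (fun x => f x + w * g x) x} \
    {x | DifferentiableAt ℝ g x}
  have hA : ∀ w, MeasurableSet (A w) := fun w =>
    (measurableSet_of_differentiableAt ℝ _).diff (measurableSet_of_differentiableAt ℝ _)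
  have hdisj : Pairwise (Function.onFun Disjoint A) := by
    intro w w' hne
    rw [Function.onFun, Set.disjoint_left]
    rintro x ⟨hw, hg⟩ ⟨hw', -⟩
    have hdiff := (DifferentiableAt.fun_sub hw hw').const_mul (w - w')⁻¹
    refine hg (hdiff.congr_of_eventuallyEq (.of_forall fun y => ?_))
    have := sub_ne_zero.2 hne
    field_simp
    ring
  refine (Measure.countable_meas_pos_of_disjoint_iUnion (μ := μ) hA hdisj).mono fun w hw => ?_
  rw [Set.mem_ofPred_eq, ae_iff] at hw
  rw [Set.mem_ofPred_eq, pos_iff_ne_zero]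
  convert hw using 2
  ext x
  simp [A]

/-- The Poincaré inequality with constant `C` for locally Lipschitz functions. -/
def HasPoincare {E : Type*} [NormedAddCommGroup E] [InnerProductSpace ℝ E] [CompleteSpace E]
    [MeasurableSpace E] (μ : Measure E) (C : NNReal) : Prop :=
  ∀ f : E → ℝ, LocallyLipschitz f → evariance f μ ≤ C * ∫⁻ x, ‖gradient f x‖ₑ ^ 2 ∂μ

namespace HasPoincare

variable {E : Type*} [NormedAddCommGroup E] [InnerProductSpace ℝ E] [CompleteSpace E]
  [MeasurableSpace E] {μ : Measure E} {C : NNReal} {f g : E → ℝ} {V W : E → E}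

theorem evariance_le (hP : HasPoincare μ C) (hf : LocallyLipschitz f)
    (hfV : ∀ᵐ x ∂μ, ‖gradient f x‖ ≤ ‖V x‖) : evariance f μ ≤ C * ∫⁻ x, ‖V x‖ₑ ^ 2 ∂μ := by
  refine (hP f hf).trans ?_
  gcongr 1
  refine lintegral_mono_ae ?_
  filter_upwards [hfV] with x hx
  gcongr
  exact enorm_le_iff_norm_le.2 hx

variable [IsFiniteMeasure μ] [BorelSpace E]

theorem memLp (hP : HasPoincare μ C) (hf : LocallyLipschitz f) (hV : MemLp V 2 μ)
    (hfV : ∀ᵐ x ∂μ, ‖gradient f x‖ ≤ ‖V x‖) : MemLp f 2 μ := by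
  rw [← evariance_lt_top_iff_memLp hf.continuous.measurable.aestronglyMeasurable]
  refine (hP.evariance_le hf hfV).trans_lt (ENNReal.mul_lt_top (by simp) ?_)
  simp [lintegral_sq_enorm_eq_ofReal_integral hV]

theorem variance_le (hP : HasPoincare μ C) (hf : LocallyLipschitz f) (hV : MemLp V 2 μ)
    (hfV : ∀ᵐ x ∂μ, ‖gradient f x‖ ≤ ‖V x‖) : Var[f; μ] ≤ C * ∫ x, ‖V x‖ ^ 2 ∂μ := by
  have h := hP.evariance_le hf hfV
  rw [lintegral_sq_enorm_eq_ofReal_integral hV, ← ofReal_variance (hP.memLp hf hV hfV),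
    ← ENNReal.ofReal_coe_nnreal, ← ENNReal.ofReal_mul C.coe_nonneg] at h
  exact (ENNReal.ofReal_le_ofReal_iff (by positivity)).1 h

theorem variance_add_const_mul_le (hP : HasPoincare μ C) (hf : LocallyLipschitz f)
    (hg : LocallyLipschitz g) (hV : MemLp V 2 μ) (hW : MemLp W 2 μ) (hfV : IsGradientOf f V)
    (hgW : IsGradientOf g W) {w : ℝ}
    (hw : ∀ᵐ x ∂μ, DifferentiableAt ℝ (fun x => f x + w * g x) x → DifferentiableAt ℝ g x) :
    Var[fun x => f x + w * g x; μ] ≤ C * ∫ x, ‖V x + w • W x‖ ^ 2 ∂μ := by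
  have hwg : LocallyLipschitz fun x => w * g x :=
    (lipschitzWith_smul w).locallyLipschitz.comp hg
  refine hP.variance_le (hf.add hwg) (hV.add (hW.const_smul w)) ?_
  filter_upwards [hw] with x hx
  by_cases hfgx : DifferentiableAt ℝ (fun x => f x + w * g x) x
  · exact (congrArg norm (gradient_add_const_mul hfV hgW (hx hfgx) hfgx)).le
  · simp [gradient_eq_zero_of_not_differentiableAt hfgx]

/- Where `f + g` is differentiable but `f` and `g` are not, its gradient is unrelated to `V + W`.
The inequality for `f + w * g` nevertheless holds for all but countably many weights `w`, hence for
`w = 1`, since both sides are polynomials in `w`. -/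
theorem variance_add_le (hP : HasPoincare μ C) (hf : LocallyLipschitz f)
    (hg : LocallyLipschitz g) (hV : MemLp V 2 μ) (hW : MemLp W 2 μ) (hfV : IsGradientOf f V)
    (hgW : IsGradientOf g W) :
    Var[fun x => f x + g x; μ] ≤ C * ∫ x, ‖V x + W x‖ ^ 2 ∂μ := by
  have hf2 : MemLp f 2 μ := hP.memLp hf hV (ae_of_all _ hfV.norm_gradient_le)
  have hg2 : MemLp g 2 μ := hP.memLp hg hW (ae_of_all _ hgW.norm_gradient_le)
  have hvar : ∀ w : ℝ, Var[fun x => f x + w * g x; μ] =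
      Var[f; μ] + 2 * (w * cov[f, g; μ]) + w ^ 2 * Var[g; μ] := fun w => by
    rw [variance_fun_add hf2 (hg2.const_mul w), covariance_const_mul_right, variance_const_mul]
  have hint : ∀ w : ℝ, ∫ x, ‖V x + w • W x‖ ^ 2 ∂μ = ∫ x, ‖V x‖ ^ 2 ∂μ +
      2 * (w * ∫ x, inner ℝ (V x) (W x) ∂μ) + w ^ 2 * ∫ x, ‖W x‖ ^ 2 ∂μ := fun w => by
    refine (integral_norm_add_sq hV (hW.const_smul w)).trans ?_
    simp_rw [Pi.smul_apply, inner_smul_right, norm_smul, mul_pow, Real.norm_eq_abs, sq_abs,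
      integral_const_mul]
  have hclosed : IsClosed {w : ℝ | Var[fun x => f x + w * g x; μ] ≤
      C * ∫ x, ‖V x + w • W x‖ ^ 2 ∂μ} := by
    simp_rw [hvar, hint]
    exact isClosed_le (by fun_prop) (by fun_prop)
  have hdense : Dense {w : ℝ | Var[fun x => f x + w * g x; μ] ≤
      C * ∫ x, ‖V x + w • W x‖ ^ 2 ∂μ} := by
    refine ((countable_setOf_not_ae_differentiableAt_imp μ f g).dense_compl ℝ).mono fun w hw => ?_
    exact hP.variance_add_const_mul_le hf hg hV hW hfV hgW (not_not.1 hw)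
  have hone := hclosed.closure_eq ▸ hdense (1 : ℝ)
  simpa only [Set.mem_ofPred_eq, one_mul, one_smul] using hone

theorem evariance_add_le (hP : HasPoincare μ C) (hf : LocallyLipschitz f)
    (hg : LocallyLipschitz g) (hV : MemLp V 2 μ) (hW : MemLp W 2 μ) (hfV : IsGradientOf f V)
    (hgW : IsGradientOf g W) :
    evariance (fun x => f x + g x) μ ≤ C * ∫⁻ x, ‖V x + W x‖ₑ ^ 2 ∂μ := by
  have hf2 : MemLp f 2 μ := hP.memLp hf hV (ae_of_all _ hfV.norm_gradient_le)
  have hg2 : MemLp g 2 μ := hP.memLp hg hW (ae_of_all _ hgW.norm_gradient_le)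
  have hfg2 : MemLp (fun x => f x + g x) 2 μ := hf2.add hg2
  have hVW : MemLp (fun x => V x + W x) 2 μ := hV.add hW
  rw [lintegral_sq_enorm_eq_ofReal_integral hVW, ← ofReal_variance hfg2,
    ← ENNReal.ofReal_coe_nnreal, ← ENNReal.ofReal_mul C.coe_nonneg]
  exact ENNReal.ofReal_le_ofReal (hP.variance_add_le hf hg hV hW hfV hgW)

end HasPoincare

theorem ae_memLp_two_section {α β F : Type*} [MeasurableSpace α] [MeasurableSpace β]
    [NormedAddCommGroup F] {μ : Measure α} {ν : Measure β} [SFinite μ] [SFinite ν]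
    {G : α × β → F} (hG : StronglyMeasurable G) (h : MemLp G 2 (μ.prod ν)) :
    ∀ᵐ y ∂ν, MemLp (fun x => G (x, y)) 2 μ := by
  have hsq := (memLp_two_iff_integrable_sq_norm hG.aestronglyMeasurable).1 h
  filter_upwards [hsq.prod_left_ae] with y hy
  exact (memLp_two_iff_integrable_sq_norm
    (hG.comp_measurable measurable_prodMk_right).aestronglyMeasurable).2 hy

theorem locallyLipschitz_comp_add_right {E F : Type*} [SeminormedAddCommGroup E]
    [PseudoEMetricSpace F] {f : E → F} (hf : LocallyLipschitz f) (y : E) :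
    LocallyLipschitz fun x => f (x + y) :=
  hf.comp (isometry_add_right y).lipschitz.locallyLipschitz

/-- The covariance matrix of `μ` is the identity: the linear form `⟪c, ·⟫` has variance `‖c‖²`
(so in particular is square integrable). The mean of `μ` is arbitrary. -/
def HasIdentityCovariance {E : Type*} [NormedAddCommGroup E] [InnerProductSpace ℝ E]
    [MeasurableSpace E] (μ : Measure E) : Prop :=
  ∀ c : E, evariance (fun x => inner ℝ c x) μ = ‖c‖ₑ ^ 2

section Convolution

variable {E : Type*} [NormedAddCommGroup E] [InnerProductSpace ℝ E] [MeasurableSpace E]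
  {μ : Measure E}

theorem HasIdentityCovariance.variance_inner (hμ : HasIdentityCovariance μ) (c : E) :
    Var[fun x => inner ℝ c x; μ] = ‖c‖ ^ 2 := by
  rw [variance, hμ c, ENNReal.toReal_pow, toReal_enorm]

variable [BorelSpace E]

theorem HasIdentityCovariance.memLp_inner [IsFiniteMeasure μ] (hμ : HasIdentityCovariance μ)
    (c : E) : MemLp (fun x => inner ℝ c x) 2 μ := by
  refine (evariance_lt_top_iff_memLp
    (innerSL ℝ c).continuous.measurable.aestronglyMeasurable).1 ?_
  exact (hμ c).trans_lt (by simp)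

variable [CompleteSpace E] [IsProbabilityMeasure μ] {C : NNReal} {f : E → ℝ}

theorem HasPoincare.evariance_section_le (hP : HasPoincare μ C) (hf : LocallyLipschitz f) (c : E)
    {y z : E} (hy : MemLp (fun x => gradient f (x + y)) 2 μ)
    (hz : MemLp (fun x => gradient f (x + z)) 2 μ) :
    evariance (fun x => f (x + y) + f (x + z) - inner ℝ c x) μ ≤
      C * ∫⁻ x, ‖gradient f (x + y) + gradient f (x + z) - c‖ₑ ^ 2 ∂μ := by
  have hl : LocallyLipschitz fun x => f (x + z) - inner ℝ c x :=
    (locallyLipschitz_comp_add_right hf z).sub (innerSL ℝ c).lipschitz.locallyLipschitz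
  have h := hP.evariance_add_le (locallyLipschitz_comp_add_right hf y) hl hy
    (hz.sub (memLp_const c)) (isGradientOf_comp_add_right f y)
    ((isGradientOf_comp_add_right f z).sub_inner c)
  simpa only [add_sub_assoc, Pi.sub_apply] using h

variable [SecondCountableTopology E]

theorem HasPoincare.memLp_comp_add (hP : HasPoincare μ C) (hf : LocallyLipschitz f)
    (hG : MemLp (fun p : E × E => gradient f (p.1 + p.2)) 2 (μ.prod μ)) :
    MemLp (fun p : E × E => f (p.1 + p.2)) 2 (μ.prod μ) := by
  have hfm : Measurable f := hf.continuous.measurable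
  have hgm : Measurable (gradient f) := measurable_gradient f
  have hsection : ∀ y, evariance (fun x => f (x + y)) μ ≤
      C * ∫⁻ x, ‖gradient f (x + y)‖ₑ ^ 2 ∂μ := fun y =>
    hP.evariance_le (locallyLipschitz_comp_add_right hf y)
      (ae_of_all _ (isGradientOf_comp_add_right f y).norm_gradient_le)
  have hsections : ∫⁻ y, evariance (fun x => f (x + y)) μ ∂μ < ∞ := by
    refine (lintegral_mono hsection).trans_lt ?_
    rw [lintegral_const_mul' _ _ (by simp),
      ← lintegral_prod_symm' (fun p : E × E => ‖gradient f (p.1 + p.2)‖ₑ ^ 2) (by fun_prop),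
      lintegral_sq_enorm_eq_ofReal_integral hG]
    exact ENNReal.mul_lt_top (by simp) (by simp)
  have hF : Measurable fun p : E × E => f (p.1 + p.2) := by fun_prop
  rw [← evariance_lt_top_iff_memLp hF.aestronglyMeasurable]
  refine (evariance_prod_le hF).trans_lt (ENNReal.mul_lt_top (by simp) ?_)
  exact ENNReal.add_lt_top.2 ⟨hsections, by simpa only [add_comm] using hsections⟩

theorem HasPoincare.variance_sub_covariance_le (hP : HasPoincare μ C)
    (hμ : HasIdentityCovariance μ) (hf : LocallyLipschitz f)
    (hG : MemLp (fun p : E × E => gradient f (p.1 + p.2)) 2 (μ.prod μ)) (c : E) :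
    2 * Var[fun p : E × E => f (p.1 + p.2); μ.prod μ] -
        4 * cov[fun p : E × E => f (p.1 + p.2), fun p => inner ℝ c p.1; μ.prod μ] + ‖c‖ ^ 2 ≤
      C * ∫ z : E × E × E, ‖gradient f (z.1 + z.2.1) + gradient f (z.1 + z.2.2) - c‖ ^ 2
        ∂(μ.prod (μ.prod μ)) := by
  have hfm : Measurable f := hf.continuous.measurable
  have hgm : Measurable (gradient f) := measurable_gradient f
  have hlm : Measurable fun x : E => inner ℝ c x := (innerSL ℝ c).continuous.measurable
  have hsection := ae_memLp_two_section (by fun_prop) hG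
  have hmemLp : MemLp (fun z : E × E × E =>
      gradient f (z.1 + z.2.1) + gradient f (z.1 + z.2.2) - c) 2 (μ.prod (μ.prod μ)) :=
    ((memLp_shared_fst hG).add (memLp_shared_snd hG)).sub (memLp_const c)
  have hle : ∫⁻ q : E × E, evariance (fun x => f (x + q.1) + f (x + q.2) - inner ℝ c x) μ
        ∂(μ.prod μ) ≤
      C * ∫⁻ z : E × E × E, ‖gradient f (z.1 + z.2.1) + gradient f (z.1 + z.2.2) - c‖ₑ ^ 2
        ∂(μ.prod (μ.prod μ)) := by
    rw [lintegral_prod_symm' (fun z : E × E × E =>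
      ‖gradient f (z.1 + z.2.1) + gradient f (z.1 + z.2.2) - c‖ₑ ^ 2) (by fun_prop),
      ← lintegral_const_mul' _ _ (by simp)]
    refine lintegral_mono_ae ?_
    filter_upwards [Measure.quasiMeasurePreserving_fst.ae hsection,
      Measure.quasiMeasurePreserving_snd.ae hsection] with q hfst hsnd
    exact hP.evariance_section_le hf c hfst hsnd
  rw [lintegral_evariance_add_sub (F := fun p : E × E => f (p.1 + p.2)) (by fun_prop)
    (hP.memLp_comp_add hf hG) (fun p => by simp [add_comm]) hlm (hμ.memLp_inner c),
    hμ.variance_inner, lintegral_sq_enorm_eq_ofReal_integral hmemLp,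
    ← ENNReal.ofReal_coe_nnreal, ← ENNReal.ofReal_mul C.coe_nonneg] at hle
  exact (ENNReal.ofReal_le_ofReal_iff (by positivity)).1 hle

theorem HasPoincare.variance_comp_add_le (hP : HasPoincare μ C) (hμ : HasIdentityCovariance μ)
    (hf : LocallyLipschitz f)
    (hG : MemLp (fun p : E × E => gradient f (p.1 + p.2)) 2 (μ.prod μ)) :
    Var[fun p : E × E => f (p.1 + p.2); μ.prod μ] ≤
      (7 * C + 1) / 4 * ∫ p : E × E, ‖gradient f (p.1 + p.2)‖ ^ 2 ∂(μ.prod μ) := by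
  set b := ∫ p : E × E, gradient f (p.1 + p.2) ∂(μ.prod μ)
  set g := ∫ p : E × E, ‖gradient f (p.1 + p.2)‖ ^ 2 ∂(μ.prod μ)
  have hmean : ‖b‖ ^ 2 ≤ g := sq_norm_integral_le hG
  have hgrad := integral_norm_add_sub_mean_sq_le hG fun p => by simp [add_comm]
  have hpoincare := hP.variance_sub_covariance_le hμ hf hG ((1 / 4 : ℝ) • b)
  have hcov := four_mul_covariance_fst_le (hP.memLp_comp_add hf hG)
    (fun p => by simp [add_comm]) (hμ.memLp_inner b)
  rw [hμ.variance_inner] at hcov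
  simp_rw [real_inner_smul_left, covariance_const_mul_right, norm_smul, mul_pow] at hpoincare
  norm_num at hpoincare
  have hgrad' := mul_le_mul_of_nonneg_left hgrad C.coe_nonneg
  have hmean' := mul_le_mul_of_nonneg_left hmean C.coe_nonneg
  linarith

theorem HasPoincare.conv_self (hP : HasPoincare μ C) (hμ : HasIdentityCovariance μ) :
    HasPoincare (μ ∗ μ) ((7 * C + 1) / 4) := by
  intro f hf
  have hfm : Measurable f := hf.continuous.measurable
  have hgm : Measurable (gradient f) := measurable_gradient f
  have hadd : MeasurePreserving (fun p : E × E => p.1 + p.2) (μ.prod μ) (μ ∗ μ) :=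
    Measurable.measurePreserving (by fun_prop) _
  by_cases htop : ∫⁻ x, ‖gradient f x‖ₑ ^ 2 ∂(μ ∗ μ) = ∞
  · rw [htop, ENNReal.mul_top (by positivity)]
    exact le_top
  rw [← hadd.lintegral_comp (by fun_prop)] at htop ⊢
  have hG : MemLp (fun p : E × E => gradient f (p.1 + p.2)) 2 (μ.prod μ) :=
    memLp_two_of_lintegral_sq_enorm_ne_top
      (by fun_prop : Measurable fun p : E × E => gradient f (p.1 + p.2)).aestronglyMeasurable htop
  rw [← evariance_comp_of_measurePreserving hadd hfm, ← ofReal_variance (hP.memLp_comp_add hf hG),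
    lintegral_sq_enorm_eq_ofReal_integral hG, ← ENNReal.ofReal_coe_nnreal,
    ← ENNReal.ofReal_mul (NNReal.coe_nonneg _)]
  exact ENNReal.ofReal_le_ofReal (by simpa using hP.variance_comp_add_le hμ hf hG)

end Convolution

theorem HasPoincare.map_smul {E : Type*} [NormedAddCommGroup E] [InnerProductSpace ℝ E]
    [CompleteSpace E] [MeasurableSpace E] [BorelSpace E] {μ : Measure E} {C : NNReal}
    (hP : HasPoincare μ C) (a : ℝ) : HasPoincare (μ.map (a • ·)) (‖a‖₊ ^ 2 * C) := by
  intro f hf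
  have hgm : Measurable (gradient f) := measurable_gradient f
  have hsmul : MeasurePreserving (fun x : E => a • x) μ (μ.map (a • ·)) :=
    (measurable_const_smul a).measurePreserving μ
  have hfa : LocallyLipschitz fun x => f (a • x) := hf.comp (lipschitzWith_smul a).locallyLipschitz
  rw [← evariance_comp_of_measurePreserving hsmul hf.continuous.measurable,
    ← hsmul.lintegral_comp (by fun_prop)]
  refine (hP _ hfa).trans_eq ?_
  simp_rw [gradient_comp_smul, enorm_smul, mul_pow]
  rw [lintegral_const_mul _ (by fun_prop), ← mul_assoc, mul_comm (C : ℝ≥0∞)]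
  simp [enorm]

section Doubling

/-- The law of `(X + Y) / √2` for `X`, `Y` independent with common law `μ`. -/
noncomputable def doubleLaw {E : Type*} [NormedAddCommGroup E] [NormedSpace ℝ E]
    [MeasurableSpace E] (μ : Measure E) : Measure E :=
  (μ ∗ μ).map ((√2)⁻¹ • ·)

theorem measurePreserving_doubleLaw {E : Type*} [NormedAddCommGroup E] [NormedSpace ℝ E]
    [MeasurableSpace E] [BorelSpace E] [SecondCountableTopology E] (μ : Measure E) :
    MeasurePreserving (fun p : E × E => (√2)⁻¹ • (p.1 + p.2)) (μ.prod μ) (doubleLaw μ) :=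
  ((measurable_const_smul (√2)⁻¹).measurePreserving (μ ∗ μ)).comp
    (measurable_add.measurePreserving (μ.prod μ))

variable {E : Type*} [NormedAddCommGroup E] [InnerProductSpace ℝ E] [MeasurableSpace E]
  [BorelSpace E] [SecondCountableTopology E] {μ : Measure E} [IsProbabilityMeasure μ]

theorem HasIdentityCovariance.doubleLaw (hμ : HasIdentityCovariance μ) :
    HasIdentityCovariance (doubleLaw μ) := by
  intro c
  have hl := hμ.memLp_inner ((√2)⁻¹ • c)
  have hsum : MemLp (fun p : E × E => inner ℝ ((√2)⁻¹ • c) p.1 + inner ℝ ((√2)⁻¹ • c) p.2) 2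
      (μ.prod μ) := (hl.comp_fst μ).add (hl.comp_snd μ)
  have hinner : ∀ p : E × E, inner ℝ c ((√2)⁻¹ • (p.1 + p.2)) =
      inner ℝ ((√2)⁻¹ • c) p.1 + inner ℝ ((√2)⁻¹ • c) p.2 := fun p => by
    rw [real_inner_smul_right, real_inner_smul_left, real_inner_smul_left, inner_add_right, mul_add]
  have hnorm : ‖(√2)⁻¹ • c‖ ^ 2 + ‖(√2)⁻¹ • c‖ ^ 2 = ‖c‖ ^ 2 := by
    rw [norm_smul, mul_pow, norm_inv, inv_pow, Real.norm_eq_abs, sq_abs, Real.sq_sqrt two_pos.le]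
    ring
  rw [← evariance_comp_of_measurePreserving (X := fun x => inner ℝ c x)
    (measurePreserving_doubleLaw μ) (by fun_prop)]
  simp_rw [hinner]
  rw [← ofReal_variance hsum, variance_add_prod hl hl, hμ.variance_inner, hnorm,
    ENNReal.ofReal_pow (norm_nonneg c), ofReal_norm]

theorem HasPoincare.doubleLaw [CompleteSpace E] {C : NNReal} (hP : HasPoincare μ C)
    (hμ : HasIdentityCovariance μ) : HasPoincare (doubleLaw μ) ((7 * C + 1) / 8) := by
  have hconst : ‖(√2)⁻¹‖₊ ^ 2 * ((7 * C + 1) / 4) = (7 * C + 1) / 8 := NNReal.eq <| by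
    push_cast
    rw [norm_inv, inv_pow, Real.norm_eq_abs, sq_abs, Real.sq_sqrt two_pos.le]
    ring
  exact hconst ▸ (hP.conv_self hμ).map_smul (√2)⁻¹

end Doubling

section StandardizedSum

variable {d : ℕ} {ν : Measure (EuclideanSpace ℝ (Fin d))} [IsProbabilityMeasure ν]

instance (n : ℕ) : IsProbabilityMeasure (stdSumLaw ν n) :=
  Measure.isProbabilityMeasure_map (by fun_prop)

theorem stdSumLaw_one : stdSumLaw ν 1 = ν := by
  have h := measurePreserving_eval (fun _ : Fin 1 => ν) 0
  simpa [stdSumLaw] using h.map_eq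

theorem measurePreserving_pi_sum {α ι ι' κ : Type*} [MeasurableSpace α] [Fintype ι] [Fintype ι']
    [Fintype κ] (ρ : Measure α) [SigmaFinite ρ] (e : ι ⊕ ι' ≃ κ) :
    MeasurePreserving (fun x : κ → α => (fun i => x (e (.inl i)), fun i => x (e (.inr i))))
      (Measure.pi fun _ => ρ) ((Measure.pi fun _ : ι => ρ).prod (Measure.pi fun _ : ι' => ρ)) :=
  (measurePreserving_sumPiEquivProdPi (X := fun _ : ι ⊕ ι' => α) fun _ => ρ).comp
    (measurePreserving_piCongrLeft (α := fun _ => α) (fun _ : κ => ρ) e).symm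

theorem stdSumLaw_add_self (m : ℕ) : stdSumLaw ν (m + m) = doubleLaw (stdSumLaw ν m) := by
  have hsum : MeasurePreserving (fun x : Fin m → EuclideanSpace ℝ (Fin d) =>
      (Real.sqrt m)⁻¹ • ∑ i, x i) (Measure.pi fun _ : Fin m => ν) (stdSumLaw ν m) :=
    Measurable.measurePreserving (by fun_prop) _
  have hdouble := (measurePreserving_doubleLaw (stdSumLaw ν m)).comp
    ((hsum.prod hsum).comp (measurePreserving_pi_sum ν finSumFinEquiv))
  rw [← hdouble.map_eq, stdSumLaw]
  congr 1
  ext1 x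
  simp only [Function.comp_apply, Prod.map_apply, ← finSumFinEquiv.sum_comp, Fintype.sum_sum_type]
  rw [← smul_add, smul_smul, ← mul_inv, ← Real.sqrt_mul two_pos.le, Nat.cast_add, ← two_mul]

theorem HasIdentityCovariance.stdSumLaw_two_pow (hν : HasIdentityCovariance ν) (n : ℕ) :
    HasIdentityCovariance (stdSumLaw ν (2 ^ n)) := by
  induction n with
  | zero => rwa [pow_zero, stdSumLaw_one]
  | succ k ih =>
    rw [pow_succ, mul_two, stdSumLaw_add_self]
    exact ih.doubleLaw

theorem HasPoincare.stdSumLaw_two_pow {r : NNReal} (hP : HasPoincare ν (1 + r))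
    (hν : HasIdentityCovariance ν) (n : ℕ) :
    HasPoincare (stdSumLaw ν (2 ^ n)) (1 + (7 / 8) ^ n * r) := by
  induction n with
  | zero => rwa [pow_zero, pow_zero, stdSumLaw_one, one_mul]
  | succ k ih =>
    rw [pow_succ 2, mul_two, stdSumLaw_add_self]
    convert ih.doubleLaw (hν.stdSumLaw_two_pow k) using 1
    ext
    push_cast
    ring

end StandardizedSum

section PoincareConst

variable {d : ℕ} {μ : Measure (EuclideanSpace ℝ (Fin d))} {C : NNReal}

theorem hasPoincare_of_poincareConst_le (hC : C ≠ 0) (h : poincareConst μ ≤ C) :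
    HasPoincare μ C := by
  intro f hf
  have hC' : (C : ℝ≥0∞) ≠ 0 := ENNReal.coe_ne_zero.2 hC
  obtain ⟨K, hK, -⟩ := sInf_lt_iff.1 (h.trans_lt ENNReal.coe_lt_top)
  by_cases htop : ∫⁻ x, ‖gradient f x‖ₑ ^ 2 ∂μ = ∞
  · simp [htop, ENNReal.mul_top hC']
  by_cases hzero : ∫⁻ x, ‖gradient f x‖ₑ ^ 2 ∂μ = 0
  · have hKf : evariance f μ ≤ K * ∫⁻ x, ‖gradient f x‖ₑ ^ 2 ∂μ := hK f hf
    simpa only [hzero, mul_zero] using hKf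
  · rw [← ENNReal.div_le_iff hzero htop]
    refine (le_sInf fun K hK => ?_).trans h
    exact (ENNReal.div_le_iff hzero htop).2 (hK f hf)

theorem HasPoincare.poincareConst_le (h : HasPoincare μ C) : poincareConst μ ≤ C :=
  sInf_le h

theorem IsIsotropic.hasIdentityCovariance [IsProbabilityMeasure μ] (h : IsIsotropic μ) :
    HasIdentityCovariance μ := by
  obtain ⟨hsq, hmean, hcov⟩ := h
  intro c
  have hid : MemLp (fun x => x) 2 μ := (memLp_two_iff_integrable_sq_norm (by fun_prop)).2 hsq
  have hcoord : ∀ i : Fin d, MemLp (fun x : EuclideanSpace ℝ (Fin d) => x i) 2 μ := fun i => by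
    simpa only [EuclideanSpace.inner_single_left, map_one, one_mul] using
      hid.const_inner (𝕜 := ℝ) (EuclideanSpace.single i (1 : ℝ))
  have hprod : ∀ i j, Integrable (fun x : EuclideanSpace ℝ (Fin d) => c i * c j * (x i * x j)) μ :=
    fun i j => ((hcoord i).integrable_mul (hcoord j)).const_mul _
  have hexpand : ∀ x, inner ℝ c x ^ 2 = ∑ i, ∑ j, c i * c j * (x i * x j) := fun x => by
    rw [PiLp.inner_apply, sq, Finset.sum_mul_sum]
    refine Finset.sum_congr rfl fun i _ => Finset.sum_congr rfl fun j _ => ?_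
    simp only [RCLike.inner_apply, conj_trivial]
    ring
  have hcentred : ∫ x, inner ℝ c x ∂μ = 0 := by
    rw [integral_inner (hid.integrable one_le_two), hmean, inner_zero_right]
  have hsecond : ∫ x, inner ℝ c x ^ 2 ∂μ = ‖c‖ ^ 2 := by
    simp_rw [hexpand]
    rw [integral_finsetSum _ fun i _ => integrable_finsetSum _ fun j _ => hprod i j]
    simp_rw [integral_finsetSum _ fun j _ => hprod _ j, integral_const_mul, hcov]
    rw [EuclideanSpace.norm_sq_eq]
    simp [sq]
  have hl : MemLp (fun x => inner ℝ c x) 2 μ := hid.const_inner c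
  rw [← ofReal_variance hl, variance_of_integral_eq_zero hl.aemeasurable hcentred, hsecond,
    ENNReal.ofReal_pow (norm_nonneg c), ofReal_norm]

end PoincareConst

theorem seven_eighths_pow_le (n : ℕ) : (7 / 8 : ℝ≥0∞) ^ n ≤ 7 / (n + 7) := by
  have hnn : (7 / 8 : NNReal) ^ n ≤ 7 / ((n : NNReal) + 7) := by
    induction n with
    | zero => simp
    | succ k ih =>
      calc (7 / 8 : NNReal) ^ (k + 1) ≤ 7 / (k + 7) * (7 / 8) := by rw [pow_succ]; gcongr
        _ ≤ 7 / ((k + 1 : ℕ) + 7) := by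
          rw [div_mul_div_comm, div_le_div_iff₀ (by positivity) (by positivity)]
          push_cast
          nlinarith [k.cast_nonneg (α := NNReal)]
  have h := ENNReal.coe_le_coe.2 hnn
  rwa [ENNReal.coe_pow, ENNReal.coe_div (by norm_num), ENNReal.coe_div (by positivity)] at h

theorem poincareConst_doubling_rate_general {d : ℕ} (ν₁ : Measure (EuclideanSpace ℝ (Fin d)))
    [IsProbabilityMeasure ν₁] (hcov : HasIdentityCovariance ν₁) (n : ℕ) :
    poincareConst (stdSumLaw ν₁ (2 ^ n)) - 1 ≤ (7 / 8) ^ n * (poincareConst ν₁ - 1) := by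
  by_cases htop : poincareConst ν₁ = ∞
  · simp [htop, ENNReal.mul_top]
  lift poincareConst ν₁ to NNReal using htop with C hC
  have hP : HasPoincare ν₁ (1 + (C - 1)) :=
    hasPoincare_of_poincareConst_le (by positivity)
      (hC.symm.trans_le (by exact_mod_cast le_add_tsub))
  exact tsub_le_iff_left.2
    ((hP.stdSumLaw_two_pow hcov n).poincareConst_le.trans_eq (by simp [ENNReal.coe_div]))

/-- **Convergence of the Poincaré constant along doubling.** For i.i.d. isotropic random
vectors with law `ν₁` satisfying `C_p(ν₁) ≤ 2`, the standardized sums satisfy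
`C_p(ν_{2^n}) − 1 ≤ 7/(n + 7)` for every `n ≥ 0`. -/
theorem poincareConst_doubling_rate {d : ℕ} (ν₁ : Measure (EuclideanSpace ℝ (Fin d)))
    [IsProbabilityMeasure ν₁] (hiso : IsIsotropic ν₁) (hp : poincareConst ν₁ ≤ 2) (n : ℕ) :
    poincareConst (stdSumLaw ν₁ (2 ^ n)) - 1 ≤ 7 / ((n : ℝ≥0∞) + 7) :=
  (poincareConst_doubling_rate_general ν₁ hiso.hasIdentityCovariance n).trans <|
    mul_le_of_le_of_le_one (seven_eighths_pow_le n)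
      (tsub_le_iff_right.2 (by rwa [one_add_one_eq_two]))
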